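/- Let k ≥ 2 and let n_1, …, n_k be even positive integers. Then the signed total domination number of the complete k-partite graph K_{n_1,…,n_k} equals 4. -/

import Mathlib

open scoped Classical

/-- The signed total domination number of a finite simple graph `G`: the minimum weight of a
function `f : V → {−1, 1}` such that `f(N(v)) ≥ 1` for every vertex `v`. -/
noncomputable def signedTotalDomNum {V : Type*} [Fintype V] (G : SimpleGraph V) : ℤ :=
  sInf {w : ℤ | ∃ f : V → ℤ, (∀ v, f v = 1 ∨ f v = -1) ∧
    (∀ v, 1 ≤ ∑ u ∈ G.neighborFinset v, f u) ∧ w = ∑ v, f v}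

/-- A sum of an even number of signs is even. -/
lemma even_sum_signs {m : ℕ} (hm : Even m) (g : Fin m → ℤ) (hg : ∀ j, g j = 1 ∨ g j = -1) :
    Even (∑ j, g j) := by
  have h : Even (∑ j, (g j + 1)) :=
    Finset.even_sum _ fun j _ => by rcases hg j with h | h <;> simp [h]
  rw [Finset.sum_add_distrib] at h
  have hm' : Even (∑ _j : Fin m, (1 : ℤ)) := by simpa using hm
  exact (Int.even_add.mp h).mpr hm'

/-- In a complete multipartite graph, the sum over a neighborhood is the total sum minus the sum
over the part of the vertex. -/
lemma sum_neighborFinset_completeMultipartiteGraph {ι : Type*} [Fintype ι] {V : ι → Type*}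
    [∀ i, Fintype (V i)] (f : (Σ i, V i) → ℤ) (v : Σ i, V i)
    [Fintype ((SimpleGraph.completeMultipartiteGraph V).neighborSet v)] :
    ∑ u ∈ (SimpleGraph.completeMultipartiteGraph V).neighborFinset v, f u =
      ∑ i, ∑ j, f ⟨i, j⟩ - ∑ j, f ⟨v.1, j⟩ := by
  have hN : (SimpleGraph.completeMultipartiteGraph V).neighborFinset v =
      (Finset.univ.erase v.1).sigma fun _ => Finset.univ := by
    ext u
    simp [SimpleGraph.completeMultipartiteGraph, eq_comm]
  rw [hN, Finset.sum_sigma, ← Finset.sum_erase_add _ _ (Finset.mem_univ v.1)]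
  ring

/-- An even number of signs can be chosen with sum `0`. -/
lemma exists_signs_sum_eq_zero {m : ℕ} (hm : Even m) :
    ∃ g : Fin m → ℤ, (∀ j, g j = 1 ∨ g j = -1) ∧ ∑ j, g j = 0 := by
  refine ⟨fun j => (-1) ^ (j : ℕ), fun j => neg_one_pow_eq_or ℤ _, ?_⟩
  rw [Fin.sum_univ_eq_sum_range (fun j => (-1 : ℤ) ^ j), neg_one_geom_sum, if_pos hm]

/-- A positive even number of signs can be chosen with sum `2`. -/
lemma exists_signs_sum_eq_two {m : ℕ} (hm : Even m) (hpos : 0 < m) :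
    ∃ g : Fin m → ℤ, (∀ j, g j = 1 ∨ g j = -1) ∧ ∑ j, g j = 2 := by
  obtain ⟨g, hg, hsum⟩ := exists_signs_sum_eq_zero hm
  obtain ⟨j₀, hj₀⟩ : ∃ j, g j = -1 := by
    by_contra! h
    have h1 : ∀ j, g j = 1 := fun j => (hg j).resolve_right (h j)
    simp [h1] at hsum
    omega
  refine ⟨Function.update g j₀ 1, fun j => ?_, ?_⟩
  · by_cases h : j = j₀
    · simp [h]
    · simpa [h] using hg j
  · rw [Finset.sum_update_of_mem (Finset.mem_univ _)]
    rw [← Finset.add_sum_erase _ _ (Finset.mem_univ j₀), hj₀, Finset.erase_eq] at hsum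
    linarith

theorem signedTotalDomNum_eq_four_all_even
    (k : ℕ) (hk : 2 ≤ k) (n : Fin k → ℕ) (hn : ∀ i, Even (n i) ∧ 0 < n i) :
    signedTotalDomNum (SimpleGraph.completeMultipartiteGraph fun i : Fin k => Fin (n i)) = 4 := by
  refine IsLeast.csInf_eq ⟨?_, ?_⟩
  · have key : ∀ i : Fin k, ∃ g : Fin (n i) → ℤ, (∀ j, g j = 1 ∨ g j = -1) ∧
        ∑ j, g j = if (i : ℕ) < 2 then 2 else 0 := fun i => by
      split_ifs
      · exact exists_signs_sum_eq_two (hn i).1 (hn i).2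
      · exact exists_signs_sum_eq_zero (hn i).1
    choose g hg hsum using key
    have htotal : ∑ i, ∑ j, g i j = 4 := by
      simp_rw [hsum]
      obtain ⟨l, rfl⟩ := Nat.exists_eq_add_of_le' hk
      rw [Fin.sum_univ_succ, Fin.sum_univ_succ]
      simp
    refine ⟨fun v => g v.1 v.2, fun v => hg _ _, fun v => ?_, ?_⟩
    · rw [sum_neighborFinset_completeMultipartiteGraph, htotal, hsum]
      split_ifs <;> norm_num
    · rw [Fintype.sum_sigma, htotal]
  · rintro w ⟨f, hf, hdom, rfl⟩
    rw [Fintype.sum_sigma]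
    have heven : ∀ i, Even (∑ j, f ⟨i, j⟩) := fun i =>
      even_sum_signs (hn i).1 _ fun j => hf _
    have htotal : Even (∑ i, ∑ j, f ⟨i, j⟩) := Finset.even_sum _ fun i _ => heven i
    have hpart : ∀ i, ∑ j, f ⟨i, j⟩ ≤ ∑ i, ∑ j, f ⟨i, j⟩ - 2 := fun i => by
      have h := hdom ⟨i, 0, (hn i).2⟩
      rw [sum_neighborFinset_completeMultipartiteGraph] at h
      obtain ⟨a, ha⟩ := heven i
      obtain ⟨b, hb⟩ := htotal
      dsimp only at h
      omega
    have hle := Finset.sum_le_sum fun i (_ : i ∈ Finset.univ) => hpart i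
    rw [Finset.sum_const, Finset.card_univ, Fintype.card_fin, nsmul_eq_mul] at hle
    by_contra! hlt
    obtain ⟨b, hb⟩ := htotal
    have hk' : (2 : ℤ) ≤ k := by exact_mod_cast hk
    have hb' : b ≤ 1 := by omega
    rw [hb] at hle
    nlinarith
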